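/- Darboux intertwining, second identity (equation (Id2)). For every 0 ≤ i ≤ m and every φ at which W(φ) ≠ 0 and W̃(φ) ≠ 0, one has (d/dφ)(Ψ̃_{m+1}·Ψ_i)(φ) / Ψ̃_{m+1}(φ) = (k_{m+1}² − k_i²)·Ψ̃_i(φ); that is, the operator A_m := Ψ̃_{m+1}^{−1} ∘ (d/dφ) ∘ Ψ̃_{m+1} sends Ψ_i to (k_{m+1}² − k_i²)·Ψ̃_i. -/

import Mathlib

/-- The Wronskian of a family of `n` real functions: the determinant of the
`n × n` matrix whose `(i, j)`-entry is the `j`-th derivative of the `i`-th function. -/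
noncomputable def wronsk {n : ℕ} (f : Fin n → ℝ → ℝ) (t : ℝ) : ℝ :=
  (Matrix.of fun i j : Fin n => iteratedDeriv (j : ℕ) (f i) t).det

/-- The functions `χ_i(φ) = cos(k_i φ + θ_i)`, `0 ≤ i ≤ m+1`. -/
noncomputable def chiF (m : ℕ) (k : Fin (m + 2) → ℤ) (θ : Fin (m + 2) → ℝ)
    (i : Fin (m + 2)) : ℝ → ℝ :=
  fun φ => Real.cos ((k i : ℝ) * φ + θ i)

/-- `W(φ) = Wr[χ_0, …, χ_m](φ)` (the first `m+1` functions). -/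
noncomputable def Wfn (m : ℕ) (k : Fin (m + 2) → ℤ) (θ : Fin (m + 2) → ℝ) : ℝ → ℝ :=
  wronsk fun j : Fin (m + 1) => chiF m k θ j.castSucc

/-- `W̃(φ) = Wr[χ_0, …, χ_{m+1}](φ)` (all `m+2` functions). -/
noncomputable def Wtfn (m : ℕ) (k : Fin (m + 2) → ℤ) (θ : Fin (m + 2) → ℝ) : ℝ → ℝ :=
  wronsk (chiF m k θ)

/-- `Ψ_i(φ) = Wr[χ_0, …, χ_{i−1}, χ_{i+1}, …, χ_m](φ)/W(φ)` for `0 ≤ i ≤ m`. -/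
noncomputable def PsiF (m : ℕ) (k : Fin (m + 2) → ℤ) (θ : Fin (m + 2) → ℝ)
    (i : Fin (m + 1)) : ℝ → ℝ :=
  fun φ => wronsk (fun j : Fin m => chiF m k θ (i.succAbove j).castSucc) φ / Wfn m k θ φ

/-- `Ψ̃_i(φ) = Wr[χ_0, …, χ_{i−1}, χ_{i+1}, …, χ_{m+1}](φ)/W̃(φ)` for `0 ≤ i ≤ m+1`. -/
noncomputable def PsitF (m : ℕ) (k : Fin (m + 2) → ℤ) (θ : Fin (m + 2) → ℝ)
    (i : Fin (m + 2)) : ℝ → ℝ :=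
  fun φ => wronsk (fun j : Fin (m + 1) => chiF m k θ (i.succAbove j)) φ / Wtfn m k θ φ

/-- Jacobi-type product rule for the determinant, column by column. -/
theorem hasDerivAt_det_cols {n : ℕ} (M : ℝ → Matrix (Fin n) (Fin n) ℝ)
    (M' : Matrix (Fin n) (Fin n) ℝ) (t : ℝ)
    (h : ∀ i j, HasDerivAt (fun s => M s i j) (M' i j) t) :
    HasDerivAt (fun s => (M s).det)
      (∑ j, ((M t).updateCol j (fun i => M' i j)).det) t := by
  have h1 : HasDerivAt (fun s => ∑ σ : Equiv.Perm (Fin n),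
      ((Equiv.Perm.sign σ : ℤ) : ℝ) * ∏ i, M s (σ i) i)
      (∑ σ : Equiv.Perm (Fin n), ((Equiv.Perm.sign σ : ℤ) : ℝ) *
        ∑ j, (∏ l ∈ Finset.univ.erase j, M t (σ l) l) • M' (σ j) j) t := by
    refine HasDerivAt.fun_sum fun σ _ => ?_
    exact (HasDerivAt.fun_finsetProd (fun i _ => h (σ i) i)).const_mul _
  have e : (fun s => (M s).det) = (fun s => ∑ σ : Equiv.Perm (Fin n),
      ((Equiv.Perm.sign σ : ℤ) : ℝ) * ∏ i, M s (σ i) i) := by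
    funext s
    exact Matrix.det_apply' _
  rw [e]
  convert h1 using 1
  simp_rw [Matrix.det_apply', Finset.mul_sum]
  rw [Finset.sum_comm]
  refine Finset.sum_congr rfl fun σ _ => Finset.sum_congr rfl fun j _ => ?_
  congr 1
  rw [← Finset.prod_erase_mul _ _ (Finset.mem_univ j), smul_eq_mul]
  congr 1
  · refine Finset.prod_congr rfl fun l hl => ?_
    rw [Matrix.updateCol_ne (Finset.ne_of_mem_erase hl)]
  · simp

/-- All iterated derivatives of `f` are differentiable. -/
def DiffAll (f : ℝ → ℝ) : Prop :=
  ∀ (j : ℕ) (t : ℝ), HasDerivAt (iteratedDeriv j f) (iteratedDeriv (j + 1) f t) t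

theorem det_update_last {n : ℕ} (f : Fin (n + 1) → ℝ → ℝ) (t : ℝ) (v : Fin (n + 1) → ℝ) :
    ((Matrix.of fun i j : Fin (n + 1) => iteratedDeriv (j : ℕ) (f i) t).updateCol
      (Fin.last n) v).det
      = ∑ i : Fin (n + 1), (-1) ^ (i + n : ℕ) * v i * wronsk (fun l => f (i.succAbove l)) t := by
  rw [Matrix.det_succ_column _ (Fin.last n)]
  refine Finset.sum_congr rfl fun i _ => ?_
  simp only [Fin.val_last, Matrix.updateCol_self]
  congr 1
  unfold wronsk
  congr 1
  ext a b
  simp [Fin.castSucc_ne_last]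

theorem sum_minor {n : ℕ} (f : Fin (n + 1) → ℝ → ℝ) (t : ℝ) (j : ℕ) (hj : j ≤ n) :
    ∑ i : Fin (n + 1), (-1) ^ (i + n : ℕ) * iteratedDeriv j (f i) t *
      wronsk (fun l => f (i.succAbove l)) t = if j = n then wronsk f t else 0 := by
  rw [← det_update_last f t (fun i => iteratedDeriv j (f i) t)]
  split_ifs with h
  · unfold wronsk
    congr 1
    ext a b
    by_cases hb : b = Fin.last n
    · subst hb; simp [h]
    · simp [Matrix.updateCol_ne hb]
  · have hlt : j < n := lt_of_le_of_ne hj h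
    have hne : (⟨j, by omega⟩ : Fin (n + 1)) ≠ Fin.last n := by
      intro h'; exact h (congrArg Fin.val h')
    refine Matrix.det_zero_of_column_eq hne fun a => ?_
    rw [Matrix.updateCol_ne hne]
    simp

theorem hasDerivAt_wronsk_sum {n : ℕ} (f : Fin n → ℝ → ℝ) (hf : ∀ i, DiffAll (f i)) (t : ℝ) :
    HasDerivAt (wronsk f)
      (∑ j : Fin n, ((Matrix.of fun i j : Fin n => iteratedDeriv (j : ℕ) (f i) t).updateCol j
        (fun i => iteratedDeriv ((j : ℕ) + 1) (f i) t)).det) t :=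
  hasDerivAt_det_cols (fun s => Matrix.of fun i j : Fin n => iteratedDeriv (j : ℕ) (f i) s)
    (Matrix.of fun i j : Fin n => iteratedDeriv ((j : ℕ) + 1) (f i) t) t
    (fun i j => hf i j t)

theorem hasDerivAt_wronsk {n : ℕ} (f : Fin (n + 1) → ℝ → ℝ) (hf : ∀ i, DiffAll (f i)) (t : ℝ) :
    HasDerivAt (wronsk f)
      (∑ i : Fin (n + 1), (-1) ^ (i + n : ℕ) * iteratedDeriv (n + 1) (f i) t *
        wronsk (fun l => f (i.succAbove l)) t) t := by
  convert hasDerivAt_wronsk_sum f hf t using 1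
  rw [← det_update_last f t (fun i => iteratedDeriv (n + 1) (f i) t), Fin.sum_univ_castSucc,
    Finset.sum_eq_zero, zero_add]
  · simp
  · intro j _
    have hne : j.castSucc ≠ j.succ := (Fin.castSucc_lt_succ).ne
    refine Matrix.det_zero_of_column_eq hne fun a => ?_
    rw [Matrix.updateCol_ne hne.symm]
    simp

theorem sum_deriv_minor {n : ℕ} (f : Fin (n + 1) → ℝ → ℝ) (hf : ∀ i, DiffAll (f i)) (t : ℝ)
    (j : ℕ) (hj : j ≤ n) :
    ∑ i : Fin (n + 1), (-1) ^ (i + n : ℕ) * iteratedDeriv j (f i) t *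
      deriv (wronsk (fun l => f (i.succAbove l))) t = - if j + 1 = n then wronsk f t else 0 := by
  have hP : ∀ i : Fin (n + 1), HasDerivAt (wronsk (fun l => f (i.succAbove l)))
      (deriv (wronsk (fun l => f (i.succAbove l))) t) t := fun i =>
    (hasDerivAt_wronsk_sum _ (fun l => hf _) t).differentiableAt.hasDerivAt
  have h1 : HasDerivAt (fun s => ∑ i : Fin (n + 1), (-1 : ℝ) ^ (i + n : ℕ) *
      iteratedDeriv j (f i) s * wronsk (fun l => f (i.succAbove l)) s)
      (∑ i : Fin (n + 1), ((-1 : ℝ) ^ (i + n : ℕ) * iteratedDeriv (j + 1) (f i) t *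
        wronsk (fun l => f (i.succAbove l)) t + (-1) ^ (i + n : ℕ) * iteratedDeriv j (f i) t *
        deriv (wronsk (fun l => f (i.succAbove l))) t)) t := by
    refine HasDerivAt.fun_sum fun i _ => ?_
    exact ((hf i j t).const_mul _).mul (hP i)
  rw [Finset.sum_add_distrib] at h1
  simp_rw [fun s => sum_minor f s j hj] at h1
  rcases eq_or_lt_of_le hj with rfl | hlt
  · simp only [if_true] at h1
    have := h1.unique (hasDerivAt_wronsk f hf t)
    simp
    linarith
  · simp only [hlt.ne, if_false] at h1
    have := h1.unique (hasDerivAt_const t (0 : ℝ))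
    rw [sum_minor f t (j + 1) hlt] at this
    linarith

theorem main_identity {m : ℕ} (f : Fin (m + 2) → ℝ → ℝ) (hf : ∀ i, DiffAll (f i))
    (lam : Fin (m + 2) → ℝ)
    (hl : ∀ i j t, iteratedDeriv (j + 2) (f i) t = - lam i * iteratedDeriv j (f i) t) (t : ℝ)
    (hW : wronsk (fun j : Fin (m + 1) => f j.castSucc) t ≠ 0) (i : Fin (m + 1)) :
    deriv (wronsk fun l : Fin m => f (i.succAbove l).castSucc) t * wronsk f t
      - wronsk (fun l : Fin m => f (i.succAbove l).castSucc) t * deriv (wronsk f) t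
      = (lam (Fin.last (m + 1)) - lam i.castSucc) *
        wronsk (fun j : Fin (m + 1) => f j.castSucc) t *
        wronsk (fun j : Fin (m + 1) => f (i.castSucc.succAbove j)) t := by
  set g : Fin (m + 1) → ℝ → ℝ := fun j => f j.castSucc with hg
  set v : Fin (m + 1) → ℝ := fun i => (-1) ^ (i + m : ℕ) *
    (deriv (wronsk fun l : Fin m => g (i.succAbove l)) t * wronsk f t
      - wronsk (fun l : Fin m => g (i.succAbove l)) t * deriv (wronsk f) t
      - (lam (Fin.last (m + 1)) - lam i.castSucc) * wronsk g t *
        wronsk (fun j : Fin (m + 1) => f (i.castSucc.succAbove j)) t) with hv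
  have hgd : ∀ i, DiffAll (g i) := fun i => hf _
  have key : v = 0 := by
    refine Matrix.eq_zero_of_vecMul_eq_zero
      (M := Matrix.of fun i j : Fin (m + 1) => iteratedDeriv (j : ℕ) (g i) t) hW ?_
    funext j
    have hj : (j : ℕ) ≤ m := Nat.lt_succ_iff.mp j.2
    have e1 := sum_deriv_minor g hgd t j hj
    have e2 := sum_minor g t j hj
    -- the sum over the larger family
    have e3 : ∑ i : Fin (m + 1), (-1 : ℝ) ^ (i + m : ℕ) * iteratedDeriv (j : ℕ) (g i) t *
        ((lam (Fin.last (m + 1)) - lam i.castSucc) *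
          wronsk (fun j : Fin (m + 1) => f (i.castSucc.succAbove j)) t)
        = - ∑ i : Fin (m + 2), (-1 : ℝ) ^ (i + (m + 1) : ℕ) * iteratedDeriv ((j : ℕ) + 2) (f i) t *
          wronsk (fun l => f (i.succAbove l)) t := by
      have e4 := sum_minor f t j (by omega)
      rw [if_neg (by omega)] at e4
      have e5 : ∑ i : Fin (m + 2), (-1 : ℝ) ^ (i + (m + 1) : ℕ) * iteratedDeriv (j : ℕ) (f i) t *
          ((lam (Fin.last (m + 1)) - lam i) * wronsk (fun l => f (i.succAbove l)) t)
          = ∑ i : Fin (m + 2), (-1 : ℝ) ^ (i + (m + 1) : ℕ) * iteratedDeriv ((j : ℕ) + 2) (f i) t *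
          wronsk (fun l => f (i.succAbove l)) t := by
        have := congrArg (fun x => lam (Fin.last (m + 1)) * x) e4
        simp only [mul_zero, Finset.mul_sum] at this
        rw [← sub_zero (∑ i : Fin (m + 2), _), ← this, ← Finset.sum_sub_distrib]
        refine Finset.sum_congr rfl fun i _ => ?_
        rw [hl]
        ring
      rw [Fin.sum_univ_castSucc] at e5
      rw [← e5]
      simp only [sub_self, zero_mul, mul_zero, add_zero, Fin.val_castSucc, hg]
      rw [← Finset.sum_neg_distrib]
      refine Finset.sum_congr rfl fun i _ => ?_
      ring
    have e6 : ∑ i : Fin (m + 2), (-1 : ℝ) ^ (i + (m + 1) : ℕ) *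
          iteratedDeriv ((j : ℕ) + 2) (f i) t * wronsk (fun l => f (i.succAbove l)) t
        = (if (j : ℕ) + 1 = m then wronsk f t else 0)
          + (if (j : ℕ) = m then deriv (wronsk f) t else 0) := by
      rcases eq_or_lt_of_le hj with h | h
      · rw [if_neg (by omega), if_pos h, zero_add, (hasDerivAt_wronsk f hf t).deriv, h]
      · rw [sum_minor f t _ (by omega), if_neg h.ne, add_zero]
        simp
    have e7 : Matrix.vecMul v (Matrix.of fun i j : Fin (m + 1) => iteratedDeriv (j : ℕ) (g i) t) j
        = (∑ i : Fin (m + 1), (-1) ^ (i + m : ℕ) * iteratedDeriv (j : ℕ) (g i) t *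
            deriv (wronsk (fun l => g (i.succAbove l))) t) * wronsk f t
          - (∑ i : Fin (m + 1), (-1) ^ (i + m : ℕ) * iteratedDeriv (j : ℕ) (g i) t *
            wronsk (fun l => g (i.succAbove l)) t) * deriv (wronsk f) t
          - (∑ i : Fin (m + 1), (-1 : ℝ) ^ (i + m : ℕ) * iteratedDeriv (j : ℕ) (g i) t *
        ((lam (Fin.last (m + 1)) - lam i.castSucc) *
          wronsk (fun j : Fin (m + 1) => f (i.castSucc.succAbove j)) t)) * wronsk g t := by
      simp only [Matrix.vecMul, dotProduct, Matrix.of_apply, Finset.sum_mul]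
      rw [← Finset.sum_sub_distrib, ← Finset.sum_sub_distrib]
      refine Finset.sum_congr rfl fun i _ => ?_
      simp only [hv]
      ring
    rw [e7, e3, e6, e1, e2]
    simp only [Pi.zero_apply]
    split_ifs <;> first | omega | ring
  have hi := congrFun key i
  simp only [hv, Pi.zero_apply] at hi
  have h1 : (-1 : ℝ) ^ (i + m : ℕ) ≠ 0 := pow_ne_zero _ (by norm_num)
  have h2 := (mul_eq_zero.mp hi).resolve_left h1
  linarith

theorem chiF_diff (m : ℕ) (k : Fin (m + 2) → ℤ) (θ : Fin (m + 2) → ℝ) (i : Fin (m + 2)) :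
    DiffAll (chiF m k θ i) := by
  intro j t
  have hc : ContDiff ℝ (j + 1 : ℕ) (chiF m k θ i) := by
    unfold chiF
    fun_prop
  have := hc.differentiable_iteratedDeriv j (by exact_mod_cast Nat.lt_succ_self j)
  rw [iteratedDeriv_succ]
  exact (this t).hasDerivAt

theorem chiF_second (m : ℕ) (k : Fin (m + 2) → ℤ) (θ : Fin (m + 2) → ℝ) (i : Fin (m + 2))
    (j : ℕ) (t : ℝ) : iteratedDeriv (j + 2) (chiF m k θ i) t
      = - (k i : ℝ) ^ 2 * iteratedDeriv j (chiF m k θ i) t := by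
  have h : deriv (deriv (chiF m k θ i)) = fun s => - (k i : ℝ) ^ 2 * chiF m k θ i s := by
    have lin : ∀ s : ℝ, HasDerivAt (fun s => (k i : ℝ) * s + θ i) (k i : ℝ) s := fun s => by
      simpa using ((hasDerivAt_id s).const_mul (k i : ℝ)).add_const (θ i)
    have h1 : deriv (chiF m k θ i) = fun s => -Real.sin ((k i : ℝ) * s + θ i) * k i := by
      funext s
      exact (lin s).cos.deriv
    rw [h1]
    funext s
    rw [((lin s).sin.fun_neg.mul_const (k i : ℝ)).deriv]
    unfold chiF
    ring
  rw [iteratedDeriv_succ', iteratedDeriv_succ', h, iteratedDeriv_const_mul_field]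

/-- **Equation (Id2): Darboux intertwining, second identity.** The operator
`A_m = Ψ̃_{m+1}^{−1} ∘ (d/dφ) ∘ Ψ̃_{m+1}` sends `Ψ_i` to `(k_{m+1}² − k_i²) Ψ̃_i`
for `0 ≤ i ≤ m`. -/
theorem darboux_intertwining_second (m : ℕ) (hm : 1 ≤ m)
    (k : Fin (m + 2) → ℤ) (hk0 : k 0 = 0) (hk : StrictMono k)
    (θ : Fin (m + 2) → ℝ) (hθ0 : θ 0 = 0)
    (i : Fin (m + 1)) (φ : ℝ)
    (hW : Wfn m k θ φ ≠ 0) (hWt : Wtfn m k θ φ ≠ 0) :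
    deriv (fun t => PsitF m k θ (Fin.last (m + 1)) t * PsiF m k θ i t) φ /
        PsitF m k θ (Fin.last (m + 1)) φ
      = ((k (Fin.last (m + 1)) : ℝ) ^ 2 - (k i.castSucc : ℝ) ^ 2) *
          PsitF m k θ i.castSucc φ := by
  have hlast : wronsk (fun j : Fin (m + 1) => chiF m k θ ((Fin.last (m + 1)).succAbove j))
      = Wfn m k θ := by
    unfold Wfn
    simp only [Fin.succAbove_last]
  have hd := chiF_diff m k θ
  set P : ℝ → ℝ := wronsk (fun j : Fin m => chiF m k θ (i.succAbove j).castSucc) with hP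
  have hPd : HasDerivAt P (deriv P φ) φ :=
    (hasDerivAt_wronsk_sum _ (fun l => hd _) φ).differentiableAt.hasDerivAt
  have hTd : HasDerivAt (Wtfn m k θ) (deriv (Wtfn m k θ) φ) φ :=
    (hasDerivAt_wronsk_sum _ (fun l => hd _) φ).differentiableAt.hasDerivAt
  have hWc : ContinuousAt (Wfn m k θ) φ :=
    (hasDerivAt_wronsk_sum _ (fun l => hd _) φ).continuousAt
  have hev : (fun t => PsitF m k θ (Fin.last (m + 1)) t * PsiF m k θ i t)
      =ᶠ[nhds φ] fun t => P t / Wtfn m k θ t := by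
    filter_upwards [hWc.eventually_ne hW] with t ht
    simp only [PsitF, PsiF, hlast, ← hP]
    field_simp
  have hmain := main_identity (chiF m k θ) hd (fun i => (k i : ℝ) ^ 2)
    (fun i j t => chiF_second m k θ i j t) φ hW i
  rw [hev.deriv_eq, (hPd.fun_div hTd hWt).deriv]
  simp only [PsitF, hlast]
  change deriv P φ * Wtfn m k θ φ - P φ * deriv (Wtfn m k θ) φ = _ * Wfn m k θ φ * _ at hmain
  rw [hmain]
  field_simp
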